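/- Let E, F be Banach spaces, n ≥ 2 and 0 < p < ∞. If T : E × ⋯ × E → F is a p-semi-integral continuous n-linear map, then T is absolutely (p; np, …, np)-summing: (∑_{j=1}^m ‖T(x_j^{(1)}, …, x_j^{(n)})‖^p)^{1/p} ≤ ‖T‖_{si,p} ∏_{k=1}^n ‖(x_j^{(k)})_{j=1}^m‖_{w,np} for every m ∈ ℕ and all finite families x_j^{(k)} ∈ E. (This inequality expresses that T is np-dominated.) -/

import Mathlib

open MeasureTheory

/-- Weak `ℓ_q` norm of a finite family in a normed space. -/
noncomputable def weakLpNorm (𝕜 : Type*) [RCLike 𝕜] {E : Type*} [NormedAddCommGroup E]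
    [NormedSpace 𝕜 E] (q : ℝ) {m : ℕ} (x : Fin m → E) : ℝ :=
  ⨆ φ : {φ : E →L[𝕜] 𝕜 // ‖φ‖ ≤ 1}, (∑ j, ‖φ.1 (x j)‖ ^ q) ^ (1 / q)

/-- `T` satisfies the `p`-semi-integral inequality with constant `C`, witnessed by a regular
Borel probability measure on the product of the closed dual unit balls with their
weak-star topologies. -/
def SemiIntegralWith (𝕜 : Type*) [RCLike 𝕜] {ι : Type*} [Fintype ι] {E : ι → Type*}
    [∀ i, NormedAddCommGroup (E i)] [∀ i, NormedSpace 𝕜 (E i)]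
    {F : Type*} [NormedAddCommGroup F]
    (p C : ℝ) (T : (∀ i, E i) → F) : Prop :=
  letI : MeasurableSpace (∀ i, {φ : WeakDual 𝕜 (E i) // ∀ z, ‖φ z‖ ≤ ‖z‖}) := borel _
  ∃ μ : Measure (∀ i, {φ : WeakDual 𝕜 (E i) // ∀ z, ‖φ z‖ ≤ ‖z‖}),
    IsProbabilityMeasure μ ∧ μ.Regular ∧
      ∀ x : ∀ i, E i,
        ‖T x‖ ≤ C * (∫ φ, ∏ i, ‖(φ i).1 (x i)‖ ^ p ∂μ) ^ (1 / p)

/-- The `si,p` norm: infimum of admissible constants. -/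
noncomputable def siNorm (𝕜 : Type*) [RCLike 𝕜] {ι : Type*} [Fintype ι] {E : ι → Type*}
    [∀ i, NormedAddCommGroup (E i)] [∀ i, NormedSpace 𝕜 (E i)]
    {F : Type*} [NormedAddCommGroup F]
    (p : ℝ) (T : (∀ i, E i) → F) : ℝ :=
  sInf {C : ℝ | 0 ≤ C ∧ SemiIntegralWith 𝕜 p C T}

/-- `T` is absolutely `(p; q₁,…,qₙ)`-summing with constant `C`. -/
def AbsSummingWith (𝕜 : Type*) [RCLike 𝕜] {ι : Type*} [Fintype ι] {E : ι → Type*}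
    [∀ i, NormedAddCommGroup (E i)] [∀ i, NormedSpace 𝕜 (E i)]
    {F : Type*} [NormedAddCommGroup F]
    (p : ℝ) (q : ι → ℝ) (C : ℝ) (T : (∀ i, E i) → F) : Prop :=
  ∀ (m : ℕ) (x : ∀ i, Fin m → E i),
    (∑ j, ‖T (fun i => x i j)‖ ^ p) ^ (1 / p) ≤ C * ∏ i, weakLpNorm 𝕜 (q i) (x i)

/-- `T` is `p`-dominated with constant `C`, witnessed by regular Borel probability measures
on the closed dual unit balls with their weak-star topologies. -/
def DominatedWith (𝕜 : Type*) [RCLike 𝕜] {ι : Type*} [Fintype ι] {E : ι → Type*}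
    [∀ i, NormedAddCommGroup (E i)] [∀ i, NormedSpace 𝕜 (E i)]
    {F : Type*} [NormedAddCommGroup F]
    (p C : ℝ) (T : (∀ i, E i) → F) : Prop :=
  letI : ∀ i, MeasurableSpace {φ : WeakDual 𝕜 (E i) // ∀ z, ‖φ z‖ ≤ ‖z‖} := fun i => borel _
  ∃ μ : ∀ i, Measure {φ : WeakDual 𝕜 (E i) // ∀ z, ‖φ z‖ ≤ ‖z‖},
    (∀ i, IsProbabilityMeasure (μ i)) ∧ (∀ i, (μ i).Regular) ∧
      ∀ x : ∀ i, E i,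
        ‖T x‖ ≤ C * ∏ i, (∫ φ, ‖φ.1 (x i)‖ ^ p ∂(μ i)) ^ (1 / p)

/-- `E` is an `𝓛_∞`-space. -/
def IsLinftySpace (𝕜 : Type*) [RCLike 𝕜] (E : Type*) [NormedAddCommGroup E]
    [NormedSpace 𝕜 E] : Prop :=
  ∃ lam : ℝ, 1 ≤ lam ∧ ∀ M : Submodule 𝕜 E, FiniteDimensional 𝕜 M →
    ∃ N : Submodule 𝕜 E, M ≤ N ∧ FiniteDimensional 𝕜 N ∧
      ∃ v : N ≃L[𝕜] (Fin (Module.finrank 𝕜 N) → 𝕜),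
        ‖(v : N →L[𝕜] (Fin (Module.finrank 𝕜 N) → 𝕜))‖ *
          ‖(v.symm : (Fin (Module.finrank 𝕜 N) → 𝕜) →L[𝕜] N)‖ ≤ lam

/-- `F` has cotype `q`. -/
def HasCotype (q : ℝ) (F : Type*) [NormedAddCommGroup F] : Prop :=
  ∃ C : ℝ, 0 ≤ C ∧ ∀ (m : ℕ) (x : Fin m → F),
    (∑ j, ‖x j‖ ^ q) ^ (1 / q) ≤
      C * ((∑ ε : Fin m → Bool, ‖∑ j, (if ε j then x j else -x j)‖ ^ (2 : ℝ)) / 2 ^ m)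
        ^ ((1 : ℝ) / 2)

/-!
For functionals `φ₁, …, φₙ` in the dual unit balls, Hölder's inequality with exponents
`1/q₁ + ⋯ + 1/qₙ = 1/p` bounds `∑ⱼ ∏ₖ |φₖ(xⱼ⁽ᵏ⁾)|ᵖ` by `∏ₖ ‖x⁽ᵏ⁾‖_{w,qₖ}ᵖ`, uniformly in the
`φₖ`. Summing the `p`-th powers of the semi-integral inequality over `j` puts exactly this sum
under an integral against a probability measure, so the uniform bound survives the integration;
the infimum over the admissible constants is taken at the end.
-/

theorem sum_prod_rpow_le_prod_rpow_sum {ι κ : Type*} (s : Finset κ) (t : Finset ι)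
    {w : ι → ℝ} (hw : ∀ i ∈ t, 0 ≤ w i) (hw' : ∑ i ∈ t, w i = 1)
    {f : ι → κ → ℝ} (hf : ∀ i ∈ t, ∀ j ∈ s, 0 ≤ f i j) :
    ∑ j ∈ s, ∏ i ∈ t, f i j ^ w i ≤ ∏ i ∈ t, (∑ j ∈ s, f i j) ^ w i := by
  let _ : MeasurableSpace κ := ⊤
  have holder := ENNReal.lintegral_prod_norm_pow_le (μ := Measure.count.restrict (s : Set κ)) t
    (f := fun i j => ENNReal.ofReal (f i j)) (fun _ _ => measurable_from_top.aemeasurable) hw' hw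
  simp only [lintegral_finset, Measure.count_singleton, mul_one] at holder
  have hsum : ∀ i ∈ t, 0 ≤ ∑ j ∈ s, f i j := fun i hi => Finset.sum_nonneg (hf i hi)
  have hpow : ∀ j ∈ s, ∀ i ∈ t, 0 ≤ f i j ^ w i := fun j hj i hi =>
    Real.rpow_nonneg (hf i hi j hj) _
  rw [← ENNReal.ofReal_le_ofReal_iff
      (Finset.prod_nonneg fun i hi => Real.rpow_nonneg (hsum i hi) _),
    ENNReal.ofReal_sum_of_nonneg fun j hj => Finset.prod_nonneg (hpow j hj),
    ENNReal.ofReal_prod_of_nonneg fun i hi => Real.rpow_nonneg (hsum i hi) _]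
  convert holder using 2 with j hj i hi
  · rw [ENNReal.ofReal_prod_of_nonneg (hpow j hj)]
    exact Finset.prod_congr rfl fun i hi =>
      (ENNReal.ofReal_rpow_of_nonneg (hf i hi j hj) (hw i hi)).symm
  · rw [← ENNReal.ofReal_sum_of_nonneg (hf i hi),
      ENNReal.ofReal_rpow_of_nonneg (hsum i hi) (hw i hi)]

theorem sum_prod_rpow_le_prod_Lp_rpow {ι κ : Type*} (s : Finset κ) (t : Finset ι)
    {p : ℝ} (hp : 0 < p) {q : ι → ℝ} (hq : ∀ i ∈ t, 0 < q i) (hpq : ∑ i ∈ t, (q i)⁻¹ = p⁻¹)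
    {f : ι → κ → ℝ} (hf : ∀ i ∈ t, ∀ j ∈ s, 0 ≤ f i j) :
    ∑ j ∈ s, ∏ i ∈ t, f i j ^ p ≤ ∏ i ∈ t, ((∑ j ∈ s, f i j ^ q i) ^ (1 / q i)) ^ p := by
  have hweights : ∑ i ∈ t, p / q i = 1 := by
    simp only [div_eq_mul_inv, ← Finset.mul_sum, hpq, mul_inv_cancel₀ hp.ne']
  have hpow : ∀ i ∈ t, ∀ j ∈ s, 0 ≤ f i j ^ q i := fun i hi j hj =>
    Real.rpow_nonneg (hf i hi j hj) _
  calc ∑ j ∈ s, ∏ i ∈ t, f i j ^ p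
      = ∑ j ∈ s, ∏ i ∈ t, (f i j ^ q i) ^ (p / q i) :=
        Finset.sum_congr rfl fun j hj => Finset.prod_congr rfl fun i hi => by
          rw [← Real.rpow_mul (hf i hi j hj), mul_div_cancel₀ _ (hq i hi).ne']
    _ ≤ ∏ i ∈ t, (∑ j ∈ s, f i j ^ q i) ^ (p / q i) :=
        sum_prod_rpow_le_prod_rpow_sum s t (fun i hi => div_nonneg hp.le (hq i hi).le) hweights hpow
    _ = ∏ i ∈ t, ((∑ j ∈ s, f i j ^ q i) ^ (1 / q i)) ^ p :=
        Finset.prod_congr rfl fun i hi => by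
          rw [← Real.rpow_mul (Finset.sum_nonneg (hpow i hi)), one_div_mul_eq_div]

/-- The closed unit ball of the dual of `E`, with the weak-star topology. Membership is phrased
pointwise because `WeakDual 𝕜 E` carries no norm. -/
abbrev WeakDualBall (𝕜 : Type*) [RCLike 𝕜] (E : Type*) [NormedAddCommGroup E]
    [NormedSpace 𝕜 E] : Type _ :=
  {φ : WeakDual 𝕜 E // ∀ z, ‖φ z‖ ≤ ‖z‖}

section WeakLpNorm

variable {𝕜 : Type*} [RCLike 𝕜] {E : Type*} [NormedAddCommGroup E] [NormedSpace 𝕜 E]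
  {q : ℝ} {m : ℕ}

theorem weakLpNorm_nonneg (x : Fin m → E) : 0 ≤ weakLpNorm 𝕜 q x :=
  Real.iSup_nonneg fun _ => by positivity

theorem bddAbove_range_rpow_sum_norm_apply (hq : 0 ≤ q) (x : Fin m → E) :
    BddAbove (Set.range fun φ : {φ : E →L[𝕜] 𝕜 // ‖φ‖ ≤ 1} =>
      (∑ j, ‖φ.1 (x j)‖ ^ q) ^ (1 / q)) := by
  refine ⟨(∑ j, ‖x j‖ ^ q) ^ (1 / q), ?_⟩
  rintro _ ⟨φ, rfl⟩
  dsimp only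
  gcongr with j
  exact φ.1.le_of_opNorm_le_of_le φ.2 le_rfl |>.trans_eq (one_mul _)

theorem rpow_sum_norm_apply_le_weakLpNorm (hq : 0 ≤ q) (x : Fin m → E) (φ : WeakDualBall 𝕜 E) :
    (∑ j, ‖φ.1 (x j)‖ ^ q) ^ (1 / q) ≤ weakLpNorm 𝕜 q x :=
  have hφ : ‖WeakDual.toStrongDual φ.1‖ ≤ 1 :=
    ContinuousLinearMap.opNorm_le_bound _ zero_le_one fun z => (φ.2 z).trans_eq (one_mul _).symm
  le_ciSup (bddAbove_range_rpow_sum_norm_apply hq x) ⟨WeakDual.toStrongDual φ.1, hφ⟩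

end WeakLpNorm

section SemiIntegral

variable {𝕜 : Type*} [RCLike 𝕜] {ι : Type*} [Fintype ι] {E : ι → Type*}
  [∀ i, NormedAddCommGroup (E i)] [∀ i, NormedSpace 𝕜 (E i)]
  {F : Type*} [NormedAddCommGroup F] {p C : ℝ} {T : (∀ i, E i) → F}

theorem sum_prod_norm_apply_rpow_le_prod_weakLpNorm_rpow (hp : 0 < p) {q : ι → ℝ}
    (hq : ∀ i, 0 < q i) (hpq : ∑ i, (q i)⁻¹ = p⁻¹) {m : ℕ} (x : ∀ i, Fin m → E i)
    (φ : ∀ i, WeakDualBall 𝕜 (E i)) :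
    ∑ j, ∏ i, ‖(φ i).1 (x i j)‖ ^ p ≤ ∏ i, weakLpNorm 𝕜 (q i) (x i) ^ p :=
  (sum_prod_rpow_le_prod_Lp_rpow Finset.univ Finset.univ hp (fun i _ => hq i) hpq
    fun _ _ _ _ => norm_nonneg _).trans <| by
      gcongr with i
      exact rpow_sum_norm_apply_le_weakLpNorm (hq i).le (x i) (φ i)

theorem continuous_prod_norm_apply_rpow (hp : 0 ≤ p) (x : ∀ i, E i) :
    Continuous fun φ : ∀ i, WeakDualBall 𝕜 (E i) => ∏ i, ‖(φ i).1 (x i)‖ ^ p :=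
  continuous_finsetProd _ fun i _ =>
    ((WeakDual.eval_continuous (x i)).comp
      (continuous_subtype_val.comp (continuous_apply i))).norm.rpow_const fun _ => Or.inr hp

theorem integrable_prod_norm_apply_rpow [MeasurableSpace (∀ i, WeakDualBall 𝕜 (E i))]
    [OpensMeasurableSpace (∀ i, WeakDualBall 𝕜 (E i))]
    (μ : Measure (∀ i, WeakDualBall 𝕜 (E i))) [IsFiniteMeasure μ] (hp : 0 ≤ p) (x : ∀ i, E i) :
    Integrable (fun φ => ∏ i, ‖(φ i).1 (x i)‖ ^ p) μ := by
  refine .of_bound (continuous_prod_norm_apply_rpow hp x).measurable.aestronglyMeasurable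
    (∏ i, ‖x i‖ ^ p) (.of_forall fun φ => ?_)
  rw [Real.norm_of_nonneg (by positivity)]
  gcongr with i
  exact (φ i).2 _

theorem SemiIntegralWith.sum_norm_rpow_le (hT : SemiIntegralWith 𝕜 p C T) (hp : 0 < p)
    (hC : 0 ≤ C) {κ : Type*} (s : Finset κ) (x : κ → ∀ i, E i) {B : ℝ}
    (hB : ∀ φ : ∀ i, WeakDualBall 𝕜 (E i), ∑ j ∈ s, ∏ i, ‖(φ i).1 (x j i)‖ ^ p ≤ B) :
    ∑ j ∈ s, ‖T (x j)‖ ^ p ≤ C ^ p * B := by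
  let _ : MeasurableSpace (∀ i, WeakDualBall 𝕜 (E i)) := borel _
  have : BorelSpace (∀ i, WeakDualBall 𝕜 (E i)) := ⟨rfl⟩
  obtain ⟨μ, _, -, hμT⟩ := hT
  have hint (j : κ) : Integrable (fun φ => ∏ i, ‖(φ i).1 (x j i)‖ ^ p) μ :=
    integrable_prod_norm_apply_rpow μ hp.le (x j)
  have hpoint (j : κ) : ‖T (x j)‖ ^ p ≤ C ^ p * ∫ φ, ∏ i, ‖(φ i).1 (x j i)‖ ^ p ∂μ := by
    have hnonneg : 0 ≤ ∫ φ, ∏ i, ‖(φ i).1 (x j i)‖ ^ p ∂μ :=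
      integral_nonneg fun φ => by positivity
    calc ‖T (x j)‖ ^ p ≤ (C * (∫ φ, ∏ i, ‖(φ i).1 (x j i)‖ ^ p ∂μ) ^ (1 / p)) ^ p := by
          gcongr
          exact hμT (x j)
      _ = C ^ p * ∫ φ, ∏ i, ‖(φ i).1 (x j i)‖ ^ p ∂μ := by
          rw [Real.mul_rpow hC (by positivity), one_div, Real.rpow_inv_rpow hnonneg hp.ne']
  calc ∑ j ∈ s, ‖T (x j)‖ ^ p
      ≤ ∑ j ∈ s, C ^ p * ∫ φ, ∏ i, ‖(φ i).1 (x j i)‖ ^ p ∂μ := Finset.sum_le_sum fun j _ => hpoint j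
    _ = C ^ p * ∫ φ, ∑ j ∈ s, ∏ i, ‖(φ i).1 (x j i)‖ ^ p ∂μ := by
        rw [← Finset.mul_sum, integral_finsetSum _ fun j _ => hint j]
    _ ≤ C ^ p * ∫ _, B ∂μ := by
        gcongr
        exacts [integrable_finsetSum _ fun j _ => hint j, integrable_const B, hB]
    _ = C ^ p * B := by simp

theorem SemiIntegralWith.absSummingWith (hT : SemiIntegralWith 𝕜 p C T) (hp : 0 < p)
    (hC : 0 ≤ C) {q : ι → ℝ} (hq : ∀ i, 0 < q i) (hpq : ∑ i, (q i)⁻¹ = p⁻¹) :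
    AbsSummingWith 𝕜 p q C T := by
  intro m x
  have hweak (i : ι) : 0 ≤ weakLpNorm 𝕜 (q i) (x i) := weakLpNorm_nonneg (x i)
  have hprod : 0 ≤ ∏ i, weakLpNorm 𝕜 (q i) (x i) := Finset.prod_nonneg fun i _ => hweak i
  rw [one_div, Real.rpow_inv_le_iff_of_pos (by positivity) (mul_nonneg hC hprod) hp,
    Real.mul_rpow hC hprod, ← Real.finsetProd_rpow _ _ fun i _ => hweak i]
  exact hT.sum_norm_rpow_le hp hC Finset.univ (fun j i => x i j)
    (sum_prod_norm_apply_rpow_le_prod_weakLpNorm_rpow hp hq hpq x)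

theorem le_siNorm_mul (hT : ∃ C, 0 ≤ C ∧ SemiIntegralWith 𝕜 p C T) {a b : ℝ} (hb : 0 ≤ b)
    (h : ∀ C, 0 ≤ C → SemiIntegralWith 𝕜 p C T → a ≤ C * b) : a ≤ siNorm 𝕜 p T * b := by
  have : Nonempty {C : ℝ | 0 ≤ C ∧ SemiIntegralWith 𝕜 p C T} := nonempty_subtype.2 hT
  rw [siNorm, sInf_eq_iInf', Real.iInf_mul_of_nonneg hb]
  exact le_ciInf fun C => h C C.2.1 C.2.2

theorem absSumming_np_of_semiIntegral_general (hp : 0 < p) {q : ι → ℝ} (hq : ∀ i, 0 < q i)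
    (hpq : ∑ i, (q i)⁻¹ = p⁻¹) (hT : ∃ C, 0 ≤ C ∧ SemiIntegralWith 𝕜 p C T) :
    AbsSummingWith 𝕜 p q (siNorm 𝕜 p T) T := fun m x =>
  le_siNorm_mul hT (Finset.prod_nonneg fun i _ => weakLpNorm_nonneg (x i)) fun _ hC hCT =>
    hCT.absSummingWith hp hC hq hpq m x

end SemiIntegral

/-- Every `p`-semi-integral continuous `n`-linear map (`n ≥ 2`) is
absolutely `(p; np,…,np)`-summing with constant `‖T‖_{si,p}` (hence `np`-dominated). -/
theorem absSumming_np_of_semiIntegral {𝕜 : Type*} [RCLike 𝕜] {E : Type*}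
    [NormedAddCommGroup E] [NormedSpace 𝕜 E] [CompleteSpace E]
    {F : Type*} [NormedAddCommGroup F] [NormedSpace 𝕜 F] [CompleteSpace F]
    {n : ℕ} (hn : 2 ≤ n) {p : ℝ} (hp : 0 < p)
    (T : ContinuousMultilinearMap 𝕜 (fun _ : Fin n => E) F)
    (hT : ∃ C, 0 ≤ C ∧ SemiIntegralWith 𝕜 p C ⇑T) :
    ∀ (m : ℕ) (x : Fin n → Fin m → E),
      (∑ j, ‖T (fun k => x k j)‖ ^ p) ^ (1 / p) ≤
        siNorm 𝕜 p ⇑T * ∏ k, weakLpNorm 𝕜 ((n : ℝ) * p) (x k) := by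
  have hn₀ : 0 < (n : ℝ) := Nat.cast_pos.2 (two_pos.trans_le hn)
  have hexponents : ∑ _k : Fin n, ((n : ℝ) * p)⁻¹ = p⁻¹ := by simp [field]
  exact absSumming_np_of_semiIntegral_general hp (fun _ => mul_pos hn₀ hp) hexponents hT
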